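/- (Lemma 1) Fix vehicle length l > 0, uncertainty parameter σₒ > 0 and speed v > 0, and let p̂ ∈ (0,1) be a maximum allowable collision probability. Then there exists a unique headway η̂ > 0 such that p(v,η̂) = p̂, and for every headway η > 0 one has p(v,η) ≤ p̂ if and only if η ≥ η̂. -/

import Mathlib

open MeasureTheory Real Filter Set

/-- The standard Gaussian probability density function. -/
noncomputable def stdGaussianPDF (x : ℝ) : ℝ :=
  (Real.sqrt (2 * Real.pi))⁻¹ * Real.exp (-x ^ 2 / 2)

/-- The standard Gaussian cumulative distribution function Φ. -/
noncomputable def stdGaussianCDF (x : ℝ) : ℝ :=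
  ∫ t in Set.Iic x, stdGaussianPDF t

/-- The per-time-step collision probability p(v,η) = Φ((l − v·η)/(v·σₒ·√η)). -/
noncomputable def collisionProb (l σₒ v η : ℝ) : ℝ :=
  stdGaussianCDF ((l - v * η) / (v * σₒ * Real.sqrt η))


theorem stdPDF_eq : stdGaussianPDF = ProbabilityTheory.gaussianPDFReal 0 1 := by
  ext x
  simp [stdGaussianPDF, ProbabilityTheory.gaussianPDFReal]

theorem stdPDF_integrable : Integrable stdGaussianPDF := by
  rw [stdPDF_eq]; exact ProbabilityTheory.integrable_gaussianPDFReal 0 1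

theorem stdPDF_pos (x : ℝ) : 0 < stdGaussianPDF x := by
  rw [stdPDF_eq]; exact ProbabilityTheory.gaussianPDFReal_pos 0 1 x one_ne_zero

theorem stdCDF_sub (x y : ℝ) :
    stdGaussianCDF y - stdGaussianCDF x = ∫ t in x..y, stdGaussianPDF t :=
  intervalIntegral.integral_Iic_sub_Iic stdPDF_integrable.integrableOn
    stdPDF_integrable.integrableOn

theorem stdCDF_strictMono : StrictMono stdGaussianCDF := by
  intro x y hxy
  have h := stdCDF_sub x y
  have h2 : 0 < ∫ t in x..y, stdGaussianPDF t :=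
    intervalIntegral.intervalIntegral_pos_of_pos stdPDF_integrable.intervalIntegrable
      stdPDF_pos hxy
  linarith

theorem stdCDF_continuous : Continuous stdGaussianCDF := by
  have h : stdGaussianCDF = fun y => stdGaussianCDF 0 + ∫ t in (0 : ℝ)..y, stdGaussianPDF t := by
    ext y
    have := stdCDF_sub 0 y
    linarith
  rw [h]
  exact continuous_const.add
    (intervalIntegral.continuous_primitive (fun _ _ => stdPDF_integrable.intervalIntegrable) 0)

theorem stdCDF_eq : stdGaussianCDF =
    fun x => ProbabilityTheory.cdf (ProbabilityTheory.gaussianReal 0 1) x := by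
  ext x
  rw [ProbabilityTheory.cdf_eq_real, Measure.real,
    ProbabilityTheory.gaussianReal_apply_eq_integral 0 one_ne_zero, ENNReal.toReal_ofReal,
    stdGaussianCDF, stdPDF_eq]
  exact integral_nonneg fun t => ProbabilityTheory.gaussianPDFReal_nonneg 0 1 t

theorem stdCDF_surj (p : ℝ) (hp : p ∈ Set.Ioo (0 : ℝ) 1) : ∃ z, stdGaussianCDF z = p := by
  have hb : Tendsto stdGaussianCDF atBot (nhds 0) := by
    rw [stdCDF_eq]; exact ProbabilityTheory.tendsto_cdf_atBot _
  have ht : Tendsto stdGaussianCDF atTop (nhds 1) := by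
    rw [stdCDF_eq]; exact ProbabilityTheory.tendsto_cdf_atTop _
  obtain ⟨a, ha⟩ := (hb.eventually_lt_const hp.1).exists
  obtain ⟨b, hb⟩ := (ht.eventually_const_lt hp.2).exists
  exact mem_range_of_exists_le_of_exists_ge stdCDF_continuous ⟨a, ha.le⟩ ⟨b, hb.le⟩

theorem arg_anti (l σₒ v : ℝ) (hl : 0 < l) (hσ : 0 < σₒ) (hv : 0 < v) (a b : ℝ) (ha : 0 < a)
    (hab : a < b) :
    (l - v * b) / (v * σₒ * Real.sqrt b) < (l - v * a) / (v * σₒ * Real.sqrt a) := by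
  have hb := ha.trans hab
  have hs := Real.sqrt_pos.2 ha
  have hst := Real.sqrt_lt_sqrt ha.le hab
  have hvs := mul_pos hv hσ
  have ht := hs.trans hst
  rw [div_lt_div_iff₀ (by positivity) (by positivity)]
  have e1 := Real.sq_sqrt ha.le
  have e2 := Real.sq_sqrt hb.le
  set s := Real.sqrt a
  set t := Real.sqrt b
  rw [← e1, ← e2]
  have : 0 < (v * σₒ) * ((t - s) * (l + v * s * t)) := by
    have := sub_pos.2 hst
    positivity
  linarith

theorem arg_surj (l σₒ v z : ℝ) (hl : 0 < l) (hσ : 0 < σₒ) (hv : 0 < v) :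
    ∃ η > 0, (l - v * η) / (v * σₒ * Real.sqrt η) = z := by
  set B := z * v * σₒ with hB
  set D := Real.sqrt (B ^ 2 + 4 * v * l) with hD
  have hD2 : D ^ 2 = B ^ 2 + 4 * v * l := Real.sq_sqrt (by positivity)
  have hDB : B < D := Real.lt_sqrt_of_sq_lt (by have := mul_pos hv hl; linarith)
  set s := (D - B) / (2 * v) with hs
  have hs0 : 0 < s := div_pos (by linarith) (by linarith)
  have h2 : 2 * v * s = D - B := by rw [hs]; field_simp
  refine ⟨s ^ 2, by positivity, ?_⟩
  rw [Real.sqrt_sq hs0.le, div_eq_iff (by positivity)]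
  have h3 : D = 2 * v * s + B := by linarith
  rw [h3] at hD2
  have h4 : v * (l - v * s ^ 2 - B * s) = 0 := by linarith
  rcases mul_eq_zero.1 h4 with h | h
  · linarith
  · rw [hB] at h; linarith

/-- Lemma 1: for any maximum allowable collision probability pmax ∈ (0,1)
there is a unique headway ηc > 0 with p(v,ηc) = pmax, and for every η > 0,
p(v,η) ≤ pmax if and only if η ≥ ηc. -/
theorem exists_unique_threshold_headway (l σₒ v pmax : ℝ)
    (hl : 0 < l) (hσ : 0 < σₒ) (hv : 0 < v) (hpmax : pmax ∈ Set.Ioo (0 : ℝ) 1) :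
    ∃ ηc > 0, collisionProb l σₒ v ηc = pmax ∧
      (∀ η > 0, collisionProb l σₒ v η ≤ pmax ↔ ηc ≤ η) ∧
      (∀ η' > 0, collisionProb l σₒ v η' = pmax → η' = ηc) := by
  obtain ⟨z, hz⟩ := stdCDF_surj pmax hpmax
  obtain ⟨c, hc, hcz⟩ := arg_surj l σₒ v z hl hσ hv
  have hce : collisionProb l σₒ v c = pmax := by rw [collisionProb, hcz, hz]
  have anti : ∀ a b : ℝ, 0 < a → a < b → collisionProb l σₒ v b < collisionProb l σₒ v a :=
    fun a b ha hab => stdCDF_strictMono (arg_anti l σₒ v hl hσ hv a b ha hab)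
  refine ⟨c, hc, hce, fun η hη => ⟨fun h => ?_, fun h => ?_⟩, fun η hη h => ?_⟩
  · by_contra! hlt
    have := anti η c hη hlt
    linarith
  · rcases h.eq_or_lt with h | h
    · rw [← h, hce]
    · have := anti c η hc h
      linarith
  · rcases lt_trichotomy η c with h1 | h1 | h1
    · have := anti η c hη h1
      linarith
    · exact h1
    · have := anti c η hc h1
      linarith
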